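/- arXiv:2002.09795 — 4 statements merged into one kernel-verified Lean document; each statement's English description precedes it below -/
import Mathlib

section
/- Let Q_0, Q_1, …, Q_T : Ω → (S×A → ℝ) be random functions and ε_1, …, ε_T ≥ 0 be such that 𝔼[‖Q_k − 𝒯Q_{k−1}‖₂²] ≤ ε_k for every k ∈ {1,…,T}. Then 𝔼[‖Q_T − Q*‖_∞] ≤ Σ_{k=1}^{T} γ^{T−k}·√(ε_k) + γ^T · 𝔼[‖Q_0 − Q*‖_∞]. -/
open MeasureTheory ProbabilityTheory Finset

/-- sup norm of a real function on a finite nonempty type. -/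
noncomputable def supNorm {ι : Type*} [Fintype ι] [Nonempty ι] (f : ι → ℝ) : ℝ :=
  Finset.univ.sup' Finset.univ_nonempty (fun i => |f i|)

/-- squared Euclidean norm of a real function on a finite type. -/
def sqNorm {ι : Type*} [Fintype ι] (f : ι → ℝ) : ℝ := ∑ i, (f i) ^ 2

/-- Bellman optimality operator. -/
noncomputable def bellman {S A : Type*} [Fintype S] [Fintype A] [Nonempty A]
    (P : S → A → S → ℝ) (r : S → A → ℝ) (γ : ℝ) (Q : S × A → ℝ) : S × A → ℝ :=
  fun x => r x.1 x.2 + γ * ∑ s' : S, P x.1 x.2 s' *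
    Finset.univ.sup' Finset.univ_nonempty (fun a' => Q (s', a'))

/-!
Sup-norm errors are distances in the product metric, so the theorem concerns perturbed fixed-point
iteration of a `K`-Lipschitz map `F` with fixed point `q` in a metric space. Along every sample
path, `dist (x k) q ≤ K * dist (x (k - 1)) q + dist (x k) (F (x (k - 1)))`, and unrolling this
recursion bounds the final error by the initial one plus a weighted sum of residuals. The bound is
linear in the residuals, so a single integration after unrolling suffices; Jensen's inequality for
the square root then passes from mean square residuals to mean residuals. The Bellman operator fits
because maxima are `1`-Lipschitz and averages against `P` do not increase the sup norm.
-/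

open scoped NNReal

section SupNorm

variable {ι : Type*} [Fintype ι]

lemma supNorm_sub_eq_dist [Nonempty ι] (f g : ι → ℝ) :
    supNorm (fun i => f i - g i) = dist f g := by
  apply le_antisymm
  · exact Finset.sup'_le _ _ fun i _ => dist_le_pi_dist f g i
  · exact dist_pi_le_iff'.2 fun i => Finset.le_sup' (fun i => |f i - g i|) (Finset.mem_univ i)

lemma sq_dist_le_sqNorm_sub (f g : ι → ℝ) : dist f g ^ 2 ≤ sqNorm (fun i => f i - g i) := by
  have hnonneg : 0 ≤ sqNorm (fun i => f i - g i) := Finset.sum_nonneg fun i _ => sq_nonneg _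
  rw [← Real.le_sqrt dist_nonneg hnonneg, dist_pi_le_iff (Real.sqrt_nonneg _)]
  exact fun i => Real.abs_le_sqrt <|
    Finset.single_le_sum (f := fun i => (f i - g i) ^ 2) (fun _ _ => sq_nonneg _)
      (Finset.mem_univ i)

lemma lipschitzWith_sup'_univ [Nonempty ι] :
    LipschitzWith 1 fun f : ι → ℝ => Finset.univ.sup' Finset.univ_nonempty f := by
  refine LipschitzWith.of_le_add fun f g => Finset.sup'_le _ _ fun i hi => ?_
  have hfg : f i - g i ≤ dist f g := (le_abs_self _).trans (dist_le_pi_dist f g i)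
  have hg : g i ≤ Finset.univ.sup' Finset.univ_nonempty g := Finset.le_sup' g hi
  linarith

lemma dist_sum_mul_le {p : ι → ℝ} (hp0 : ∀ i, 0 ≤ p i) (hp1 : ∑ i, p i ≤ 1) (f g : ι → ℝ) :
    dist (∑ i, p i * f i) (∑ i, p i * g i) ≤ dist f g :=
  calc dist (∑ i, p i * f i) (∑ i, p i * g i)
    _ ≤ ∑ i, dist (p i * f i) (p i * g i) := dist_sum_sum_le _ _ _
    _ = ∑ i, p i * dist (f i) (g i) := by
        simp only [Real.dist_eq, ← mul_sub, abs_mul, abs_of_nonneg (hp0 _)]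
    _ ≤ ∑ i, p i * dist f g := by
        gcongr with i
        · exact hp0 i
        · exact dist_le_pi_dist f g i
    _ = (∑ i, p i) * dist f g := (Finset.sum_mul ..).symm
    _ ≤ dist f g := mul_le_of_le_one_left dist_nonneg hp1

end SupNorm

lemma lipschitzWith_bellman {S A : Type*} [Fintype S] [Fintype A] [Nonempty A]
    {P : S → A → S → ℝ} (hP0 : ∀ s a s', 0 ≤ P s a s') (hP1 : ∀ s a, ∑ s', P s a s' ≤ 1)
    (r : S → A → ℝ) (γ : ℝ≥0) : LipschitzWith γ (bellman P r γ) := by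
  refine LipschitzWith.of_dist_le_mul fun Q R => (dist_pi_le_iff (by positivity)).2 fun x => ?_
  have hmax : dist (fun s => Finset.univ.sup' Finset.univ_nonempty fun a => Q (s, a))
      (fun s => Finset.univ.sup' Finset.univ_nonempty fun a => R (s, a)) ≤ dist Q R := by
    refine (dist_pi_le_iff dist_nonneg).2 fun s => ?_
    refine (lipschitzWith_sup'_univ.dist_le_mul _ _).trans ?_
    rw [NNReal.coe_one, one_mul]
    exact (dist_pi_le_iff dist_nonneg).2 fun a => dist_le_pi_dist Q R (s, a)
  simp only [bellman, dist_add_left, Real.dist_eq, ← mul_sub, abs_mul, NNReal.abs_eq]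
  gcongr
  exact (dist_sum_mul_le (hP0 _ _) (hP1 _ _) _ _).trans hmax

lemma dist_fixedPt_le_sum_dist_add {X : Type*} [PseudoMetricSpace X] {K : ℝ≥0} {F : X → X}
    (hF : LipschitzWith K F) {q : X} (hq : Function.IsFixedPt F q) (x : ℕ → X) (n : ℕ) :
    dist (x n) q ≤ ∑ k ∈ Finset.Icc 1 n, (K : ℝ) ^ (n - k) * dist (x k) (F (x (k - 1)))
      + (K : ℝ) ^ n * dist (x 0) q := by
  have hstep (k : ℕ) : dist (x (k + 1)) q ≤ K * dist (x k) q + dist (x (k + 1)) (F (x k)) :=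
    calc dist (x (k + 1)) q
      _ ≤ dist (x (k + 1)) (F (x k)) + dist (F (x k)) (F q) := by
          simpa only [hq.eq] using dist_triangle (x (k + 1)) (F (x k)) q
      _ ≤ K * dist (x k) q + dist (x (k + 1)) (F (x k)) := by
          rw [add_comm]; gcongr; exact hF.dist_le_mul _ _
  have hunroll := discrete_gronwall_prod_general (u := fun k => dist (x k) q)
    (c := fun _ => (K : ℝ)) (b := fun k => dist (x (k + 1)) (F (x k))) (fun k _ => hstep k)
    (fun _ _ => K.coe_nonneg) n.zero_le
  simp only [Finset.prod_const, Nat.card_Ico, Nat.sub_zero] at hunroll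
  have hshift := Finset.sum_Ico_add'
    (fun k => (K : ℝ) ^ (n - k) * dist (x k) (F (x (k - 1)))) 0 n 1
  simp only [Nat.add_sub_cancel, zero_add, Finset.Ico_add_one_right_eq_Icc] at hshift
  rw [← hshift]
  simpa only [mul_comm, add_comm] using hunroll

section SqrtIntegral

variable {Ω : Type*} [MeasurableSpace Ω] {μ : Measure Ω} {f : Ω → ℝ}

lemma integrable_sqrt_of_integrable [IsFiniteMeasure μ] (hf : Integrable f μ) :
    Integrable (fun ω => √(f ω)) μ := by
  refine ((integrable_const 1).add hf.abs).mono'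
    (Real.continuous_sqrt.comp_aestronglyMeasurable hf.aestronglyMeasurable)
    (.of_forall fun ω => ?_)
  rw [Real.norm_of_nonneg (Real.sqrt_nonneg _)]
  have habs := abs_nonneg (f ω)
  refine Real.sqrt_le_iff.2 ⟨?_, ?_⟩ <;> simp only [Pi.add_apply]
  · linarith
  · nlinarith [le_abs_self (f ω)]

lemma integral_sqrt_le_sqrt_integral [IsProbabilityMeasure μ] (hf0 : 0 ≤ᵐ[μ] f)
    (hf : Integrable f μ) : ∫ ω, √(f ω) ∂μ ≤ √(∫ ω, f ω ∂μ) :=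
  Real.strictConcaveOn_sqrt.concaveOn.le_map_integral Real.continuous_sqrt.continuousOn
    isClosed_Ici hf0 hf (integrable_sqrt_of_integrable hf)

end SqrtIntegral

/-- The squared residuals are only dominated by `ρ k`, so that `ρ k` may come from a stronger
metric, such as the Euclidean one. -/
theorem outer_iteration_convergence_general {X : Type*} [PseudoMetricSpace X]
    {Ω : Type*} [MeasurableSpace Ω] {μ : Measure Ω} [IsProbabilityMeasure μ]
    {K : ℝ≥0} {F : X → X} (hF : LipschitzWith K F) {q : X} (hq : Function.IsFixedPt F q)
    {T : ℕ} {Q : ℕ → Ω → X} {ρ : ℕ → Ω → ℝ} {ε : ℕ → ℝ}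
    (hρ : ∀ k ∈ Finset.Icc 1 T, ∀ᵐ ω ∂μ, dist (Q k ω) (F (Q (k - 1) ω)) ^ 2 ≤ ρ k ω)
    (hρ_int : ∀ k ∈ Finset.Icc 1 T, Integrable (ρ k) μ)
    (hρ_le : ∀ k ∈ Finset.Icc 1 T, ∫ ω, ρ k ω ∂μ ≤ ε k)
    (hQ0 : Integrable (fun ω => dist (Q 0 ω) q) μ)
    (hQT : AEStronglyMeasurable (fun ω => dist (Q T ω) q) μ) :
    Integrable (fun ω => dist (Q T ω) q) μ ∧
      ∫ ω, dist (Q T ω) q ∂μ ≤ ∑ k ∈ Finset.Icc 1 T, (K : ℝ) ^ (T - k) * √(ε k)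
        + (K : ℝ) ^ T * ∫ ω, dist (Q 0 ω) q ∂μ := by
  have hpath : ∀ᵐ ω ∂μ, dist (Q T ω) q ≤
      ∑ k ∈ Finset.Icc 1 T, (K : ℝ) ^ (T - k) * √(ρ k ω) + (K : ℝ) ^ T * dist (Q 0 ω) q := by
    filter_upwards [(Filter.eventually_all_finset _).2 hρ] with ω hω
    refine (dist_fixedPt_le_sum_dist_add hF hq (Q · ω) T).trans ?_
    gcongr with k hk
    exact Real.le_sqrt_of_sq_le (hω k hk)
  have hmean (k) (hk : k ∈ Finset.Icc 1 T) : ∫ ω, √(ρ k ω) ∂μ ≤ √(ε k) :=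
    (integral_sqrt_le_sqrt_integral ((hρ k hk).mono fun ω hω => (sq_nonneg _).trans hω)
      (hρ_int k hk)).trans (Real.sqrt_le_sqrt (hρ_le k hk))
  have hterm (k) (hk : k ∈ Finset.Icc 1 T) :
      Integrable (fun ω => (K : ℝ) ^ (T - k) * √(ρ k ω)) μ :=
    (integrable_sqrt_of_integrable (hρ_int k hk)).const_mul _
  have hsum := integrable_finsetSum _ hterm
  have hinit := hQ0.const_mul ((K : ℝ) ^ T)
  have hfinal : Integrable (fun ω => dist (Q T ω) q) μ :=
    (hsum.add hinit).mono' hQT <| by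
      simpa only [Real.norm_of_nonneg dist_nonneg, Pi.add_apply] using hpath
  refine ⟨hfinal, ?_⟩
  calc ∫ ω, dist (Q T ω) q ∂μ
    _ ≤ ∫ ω, ∑ k ∈ Finset.Icc 1 T, (K : ℝ) ^ (T - k) * √(ρ k ω)
          + (K : ℝ) ^ T * dist (Q 0 ω) q ∂μ :=
        integral_mono_ae hfinal (hsum.add hinit) hpath
    _ = ∑ k ∈ Finset.Icc 1 T, (K : ℝ) ^ (T - k) * ∫ ω, √(ρ k ω) ∂μ
          + (K : ℝ) ^ T * ∫ ω, dist (Q 0 ω) q ∂μ := by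
        rw [integral_add hsum hinit, integral_finsetSum _ hterm]
        simp only [integral_const_mul]
    _ ≤ ∑ k ∈ Finset.Icc 1 T, (K : ℝ) ^ (T - k) * √(ε k)
          + (K : ℝ) ^ T * ∫ ω, dist (Q 0 ω) q ∂μ := by
        gcongr with k hk
        exact hmean k hk

theorem outer_iteration_convergence
    {S A : Type*} [Fintype S] [Fintype A] [Nonempty S] [Nonempty A]
    {Ω : Type*} [MeasurableSpace Ω] (μ : Measure Ω) [IsProbabilityMeasure μ]
    (P : S → A → S → ℝ) (hP0 : ∀ s a s', 0 ≤ P s a s') (hP1 : ∀ s a, ∑ s', P s a s' = 1)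
    (r : S → A → ℝ) (hr : ∀ s a, |r s a| ≤ 1)
    (γ : ℝ) (hγ : γ ∈ Set.Ioo (0 : ℝ) 1)
    (Qstar : S × A → ℝ) (hQstar : bellman P r γ Qstar = Qstar)
    (T : ℕ) (Q : ℕ → Ω → S × A → ℝ) (hQmeas : ∀ k, Measurable (Q k))
    (ε : ℕ → ℝ) (hε0 : ∀ k ∈ Finset.Icc 1 T, 0 ≤ ε k)
    (hmomInt : ∀ k ∈ Finset.Icc 1 T,
      Integrable (fun ω => sqNorm (fun x => Q k ω x - bellman P r γ (Q (k - 1) ω) x)) μ)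
    (hmom : ∀ k ∈ Finset.Icc 1 T,
      ∫ ω, sqNorm (fun x => Q k ω x - bellman P r γ (Q (k - 1) ω) x) ∂μ ≤ ε k)
    (hint : ∀ k, Integrable (fun ω => supNorm (fun x => Q k ω x - Qstar x)) μ) :
    ∫ ω, supNorm (fun x => Q T ω x - Qstar x) ∂μ ≤
      (∑ k ∈ Finset.Icc 1 T, γ ^ (T - k) * Real.sqrt (ε k))
        + γ ^ T * ∫ ω, supNorm (fun x => Q 0 ω x - Qstar x) ∂μ := by
  simp only [supNorm_sub_eq_dist] at hint ⊢
  exact (outer_iteration_convergence_general (K := ⟨γ, hγ.1.le⟩)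
    (lipschitzWith_bellman hP0 (fun s a => (hP1 s a).le) r _) hQstar
    (fun _ _ => .of_forall fun _ => sq_dist_le_sqNorm_sub _ _) hmomInt hmom
    (hint 0) (hint T).aestronglyMeasurable).2
end

section
/- Let Q_T : Ω → (S×A → ℝ) be a random function and π : Ω → (S → A) a random policy such that π(ω) is a greedy policy for Q_T(ω) for almost every ω. If 𝔼[‖Q_T − Q*‖_∞] ≤ ε, then 𝔼[‖Q^{π} − Q*‖_∞] ≤ 2γε/(1−γ), where Q^{π}(ω) := Q^{π(ω)}. -/
open MeasureTheory ProbabilityTheory Finset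

/-- Bellman operator of a deterministic policy. -/
noncomputable def bellmanPi {S A : Type*} [Fintype S]
    (P : S → A → S → ℝ) (r : S → A → ℝ) (γ : ℝ) (π : S → A) (Q : S × A → ℝ) : S × A → ℝ :=
  fun x => r x.1 x.2 + γ * ∑ s' : S, P x.1 x.2 s' * Q (s', π s')

/-- A greedy policy for a Q-function. -/
def IsGreedy {S A : Type*} [Fintype A] [Nonempty A] (Q : S × A → ℝ) (π : S → A) : Prop :=
  ∀ s, Q (s, π s) = Finset.univ.sup' Finset.univ_nonempty (fun a => Q (s, a))

/-!
Both Bellman operators look one step ahead with a state value that is a nonexpansive function of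
`Q`: the maximum over actions for `𝒯`, the action chosen by `π` for `𝒯_π`. Hence both are
`γ`-Lipschitz in the sup norm, and greediness of `π` for `Q` says that they agree at `Q`. Therefore
`Q*` is nearly fixed by `𝒯_π`:
`‖Q* - 𝒯_π Q*‖ ≤ ‖𝒯 Q* - 𝒯 Q‖ + ‖𝒯_π Q - 𝒯_π Q*‖ ≤ 2γ ‖Q - Q*‖`,
and the fixed point of a `γ`-contraction is within `1 / (1 - γ)` times such a defect.
-/

section Lipschitz

open scoped NNReal

theorem dist_isFixedPt_le_of_apply_eq {α : Type*} [MetricSpace α] {K L : ℝ≥0} {f g : α → α}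
    (hf : ContractingWith K f) (hg : LipschitzWith L g) {x y z : α} (hx : f x = g x)
    (hy : Function.IsFixedPt f y) (hz : Function.IsFixedPt g z) :
    dist y z ≤ (K + L) / (1 - K) * dist x z := by
  have hdefect : dist z (f z) ≤ (K + L) * dist x z :=
    calc dist z (f z) = dist (g z) (f z) := by rw [hz.eq]
      _ ≤ dist (g z) (g x) + dist (f x) (f z) := hx ▸ dist_triangle (g z) (g x) (f z)
      _ ≤ L * dist z x + K * dist x z := add_le_add (hg.dist_le_mul z x) (hf.dist_le_mul x z)
      _ = (K + L) * dist x z := by rw [dist_comm z x]; ring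
  calc dist y z = dist z y := dist_comm y z
    _ ≤ dist z (f z) / (1 - K) := hf.dist_le_of_fixedPoint z hy
    _ ≤ (K + L) * dist x z / (1 - K) := div_le_div_of_nonneg_right hdefect hf.one_sub_K_pos.le
    _ = (K + L) / (1 - K) * dist x z := (div_mul_eq_mul_div _ _ _).symm

theorem dist_comp_right_le {ι κ α : Type*} [Fintype ι] [Fintype κ] [PseudoMetricSpace α]
    (f g : κ → α) (e : ι → κ) : dist (f ∘ e) (g ∘ e) ≤ dist f g :=
  (dist_pi_le_iff dist_nonneg).2 fun i => dist_le_pi_dist f g (e i)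

variable {ι : Type*} [Fintype ι]

theorem dist_sup'_le {s : Finset ι} (hs : s.Nonempty) (f g : ι → ℝ) :
    dist (s.sup' hs f) (s.sup' hs g) ≤ dist f g := by
  have hle (f g : ι → ℝ) : s.sup' hs f ≤ s.sup' hs g + dist f g :=
    sup'_le hs f fun i hi =>
      calc f i ≤ g i + dist (f i) (g i) := sub_le_iff_le_add'.1 (le_abs_self (f i - g i))
        _ ≤ s.sup' hs g + dist f g := add_le_add (le_sup' g hi) (dist_le_pi_dist f g i)
  rw [Real.dist_eq, abs_sub_le_iff, sub_le_iff_le_add', sub_le_iff_le_add']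
  exact ⟨hle f g, dist_comm g f ▸ hle g f⟩

theorem norm_sum_mul_le {R : Type*} [NonUnitalSeminormedRing R] (w v : ι → R) :
    ‖∑ i, w i * v i‖ ≤ (∑ i, ‖w i‖) * ‖v‖ := by
  rw [sum_mul]
  exact norm_sum_le_of_le _ fun i _ => (norm_mul_le _ _).trans <|
    mul_le_mul_of_nonneg_left (norm_le_pi_norm v i) (norm_nonneg _)

theorem supNorm_eq_norm [Nonempty ι] (f : ι → ℝ) : supNorm f = ‖f‖ :=
  le_antisymm (sup'_le _ _ fun i _ => norm_le_pi_norm f i) <|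
    (pi_norm_le_iff_of_nonempty f).2 fun i => le_sup' (fun i => |f i|) (mem_univ i)

end Lipschitz

section Bellman

open scoped NNReal

variable {S A : Type*}

/-- The state value `V(s) = max_a Q(s, a)` of an action value `Q`, which enters the Bellman
optimality operator. -/
noncomputable def maxValue [Fintype A] [Nonempty A] (Q : S × A → ℝ) : S → ℝ :=
  fun s => univ.sup' univ_nonempty fun a => Q (s, a)

variable [Fintype S]

/-- The one-step lookahead `r(s, a) + γ ∑ s', P(s' | s, a) V(s')` of a state value `V`, through
which both Bellman operators factor. -/
def lookahead (P : S → A → S → ℝ) (r : S → A → ℝ) (γ : ℝ) (V : S → ℝ) : S × A → ℝ :=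
  fun x => r x.1 x.2 + γ * ∑ s', P x.1 x.2 s' * V s'

theorem bellmanPi_eq_lookahead_comp (P : S → A → S → ℝ) (r : S → A → ℝ) (γ : ℝ) (π : S → A) :
    bellmanPi P r γ π = lookahead P r γ ∘ fun Q s => Q (s, π s) :=
  rfl

variable [Fintype A]

theorem bellman_eq_lookahead_comp [Nonempty A] (P : S → A → S → ℝ) (r : S → A → ℝ) (γ : ℝ) :
    bellman P r γ = lookahead P r γ ∘ maxValue :=
  rfl

theorem IsGreedy.bellmanPi_eq_bellman [Nonempty A] {Q : S × A → ℝ} {π : S → A}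
    (hπ : IsGreedy Q π) (P : S → A → S → ℝ) (r : S → A → ℝ) (γ : ℝ) :
    bellmanPi P r γ π Q = bellman P r γ Q :=
  congrArg (lookahead P r γ) (funext hπ)

theorem lipschitzWith_maxValue [Nonempty A] :
    LipschitzWith 1 (maxValue : (S × A → ℝ) → S → ℝ) :=
  .mk_one fun Q Q' => (dist_pi_le_iff dist_nonneg).2 fun s =>
    (dist_sup'_le univ_nonempty (Q ∘ Prod.mk s) (Q' ∘ Prod.mk s)).trans <|
      dist_comp_right_le Q Q' (Prod.mk s)

variable {P : S → A → S → ℝ} (hP : ∀ s a, ∑ s', |P s a s'| ≤ 1) {r : S → A → ℝ} {γ : ℝ≥0}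
include hP

theorem lipschitzWith_lookahead : LipschitzWith γ (lookahead P r γ) :=
  .of_dist_le_mul fun V W => (dist_pi_le_iff (by positivity)).2 fun ⟨s, a⟩ =>
    calc dist (lookahead P r γ V (s, a)) (lookahead P r γ W (s, a))
        = γ * ‖∑ s', P s a s' * (V - W) s'‖ := by
          rw [lookahead, lookahead, dist_add_left, Real.dist_eq, ← mul_sub, abs_mul,
            NNReal.abs_eq, ← sum_sub_distrib, Real.norm_eq_abs]
          simp only [Pi.sub_apply, mul_sub]
      _ ≤ γ * ((∑ s', |P s a s'|) * dist V W) := by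
          rw [dist_eq_norm]
          exact mul_le_mul_of_nonneg_left (norm_sum_mul_le _ _) γ.coe_nonneg
      _ ≤ γ * dist V W :=
          mul_le_mul_of_nonneg_left (mul_le_of_le_one_left dist_nonneg (hP s a)) γ.coe_nonneg

theorem lipschitzWith_bellmanPi (π : S → A) : LipschitzWith γ (bellmanPi P r γ π) := by
  have heval : LipschitzWith 1 fun (Q : S × A → ℝ) s => Q (s, π s) :=
    .mk_one fun Q Q' => dist_comp_right_le Q Q' fun s => (s, π s)
  simpa only [bellmanPi_eq_lookahead_comp, mul_one] using (lipschitzWith_lookahead hP).comp heval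

theorem lipschitzWith_bellman_s5 [Nonempty A] : LipschitzWith γ (bellman P r γ) := by
  simpa only [bellman_eq_lookahead_comp, mul_one] using
    (lipschitzWith_lookahead hP).comp lipschitzWith_maxValue

theorem IsGreedy.norm_sub_le_of_isFixedPt [Nonempty A] (hγ : γ < 1)
    {Q Qstar Qpi : S × A → ℝ} {π : S → A} (hπ : IsGreedy Q π)
    (hQstar : Function.IsFixedPt (bellman P r γ) Qstar)
    (hQpi : Function.IsFixedPt (bellmanPi P r γ π) Qpi) :
    ‖Qpi - Qstar‖ ≤ 2 * γ / (1 - γ) * ‖Q - Qstar‖ := by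
  simpa only [dist_eq_norm, two_mul] using
    dist_isFixedPt_le_of_apply_eq ⟨hγ, lipschitzWith_bellmanPi hP π⟩
      (lipschitzWith_bellman_s5 hP) (hπ.bellmanPi_eq_bellman P r γ) hQpi hQstar

end Bellman

theorem greedy_policy_qvalue_error_general
    {S A : Type*} [Fintype S] [Fintype A] [Nonempty S] [Nonempty A]
    {Ω : Type*} [MeasurableSpace Ω] (μ : Measure Ω)
    (P : S → A → S → ℝ) (hP : ∀ s a, ∑ s', |P s a s'| ≤ 1)
    (r : S → A → ℝ) (γ : ℝ) (hγ : γ ∈ Set.Ico (0 : ℝ) 1)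
    (Qstar : S × A → ℝ) (hQstar : bellman P r γ Qstar = Qstar)
    (Qpi : (S → A) → S × A → ℝ) (hQpi : ∀ π, bellmanPi P r γ π (Qpi π) = Qpi π)
    (QT : Ω → S × A → ℝ) (π : Ω → S → A)
    (hπ : ∀ᵐ ω ∂μ, IsGreedy (QT ω) (π ω))
    (ε : ℝ)
    (hQTint : Integrable (fun ω => supNorm (fun x => QT ω x - Qstar x)) μ)
    (hQT : ∫ ω, supNorm (fun x => QT ω x - Qstar x) ∂μ ≤ ε)
    (hQpiint : Integrable (fun ω => supNorm (fun x => Qpi (π ω) x - Qstar x)) μ) :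
    ∫ ω, supNorm (fun x => Qpi (π ω) x - Qstar x) ∂μ ≤ 2 * γ * ε / (1 - γ) := by
  obtain ⟨hγ0, hγ1⟩ := hγ
  lift γ to NNReal using hγ0
  simp only [supNorm_eq_norm] at hQTint hQT hQpiint ⊢
  calc ∫ ω, ‖Qpi (π ω) - Qstar‖ ∂μ
      ≤ ∫ ω, 2 * γ / (1 - γ) * ‖QT ω - Qstar‖ ∂μ := by
        refine integral_mono_ae hQpiint (hQTint.const_mul _) (hπ.mono fun ω hω => ?_)
        exact hω.norm_sub_le_of_isFixedPt hP (mod_cast hγ1) hQstar (hQpi _)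
    _ = 2 * γ / (1 - γ) * ∫ ω, ‖QT ω - Qstar‖ ∂μ := integral_const_mul _ _
    _ ≤ 2 * γ / (1 - γ) * ε :=
        mul_le_mul_of_nonneg_left hQT (div_nonneg (by positivity) (sub_nonneg.2 hγ1.le))
    _ = 2 * γ * ε / (1 - γ) := div_mul_eq_mul_div _ _ _

theorem greedy_policy_qvalue_error
    {S A : Type*} [Fintype S] [Fintype A] [Nonempty S] [Nonempty A]
    {Ω : Type*} [MeasurableSpace Ω] (μ : Measure Ω) [IsProbabilityMeasure μ]
    (P : S → A → S → ℝ) (hP0 : ∀ s a s', 0 ≤ P s a s') (hP1 : ∀ s a, ∑ s', P s a s' = 1)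
    (r : S → A → ℝ) (hr : ∀ s a, |r s a| ≤ 1)
    (γ : ℝ) (hγ : γ ∈ Set.Ioo (0 : ℝ) 1)
    (Qstar : S × A → ℝ) (hQstar : bellman P r γ Qstar = Qstar)
    (Qpi : (S → A) → S × A → ℝ) (hQpi : ∀ π, bellmanPi P r γ π (Qpi π) = Qpi π)
    (QT : Ω → S × A → ℝ) (π : Ω → S → A)
    (hπ : ∀ᵐ ω ∂μ, IsGreedy (QT ω) (π ω))
    (ε : ℝ)
    (hQTint : Integrable (fun ω => supNorm (fun x => QT ω x - Qstar x)) μ)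
    (hQT : ∫ ω, supNorm (fun x => QT ω x - Qstar x) ∂μ ≤ ε)
    (hQpiint : Integrable (fun ω => supNorm (fun x => Qpi (π ω) x - Qstar x)) μ) :
    ∫ ω, supNorm (fun x => Qpi (π ω) x - Qstar x) ∂μ ≤ 2 * γ * ε / (1 - γ) := by
  have hP s a : ∑ s', |P s a s'| ≤ 1 := by simp only [abs_of_nonneg (hP0 s a _), hP1, le_refl]
  exact greedy_policy_qvalue_error_general μ P hP r γ (Set.Ioo_subset_Ico_self hγ) Qstar hQstar
    Qpi hQpi QT π hπ ε hQTint hQT hQpiint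
end

section
/- The second moment of the stochastic gradient at the optimum satisfies σ² := Σ_{(s,a,s')} d(s,a)·P s a s' · ‖g(Q*; Q*, (s,a,s'))‖₂² ≤ 9·|S|·|A|/(1−γ)². -/
open MeasureTheory ProbabilityTheory Finset

/-- Stochastic gradient for sample `(s,a,s')`: zero except at coordinate `(s,a)`,
where it takes the value `Q(s,a) - r(s,a) - γ·max_{a'} Qk(s',a')`. -/
noncomputable def sgrad {S A : Type*} [Fintype A] [Nonempty A] [DecidableEq S] [DecidableEq A]
    (r : S → A → ℝ) (γ : ℝ) (Q Qk : S × A → ℝ) (smp : S × A × S) : S × A → ℝ :=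
  fun x => if x = (smp.1, smp.2.1) then
      Q (smp.1, smp.2.1) - r smp.1 smp.2.1
        - γ * Finset.univ.sup' Finset.univ_nonempty (fun a' => Qk (smp.2.2, a'))
    else 0

/-- squared `D`-weighted norm. -/
def DnormSq {S A : Type*} [Fintype S] [Fintype A] (d : S × A → ℝ) (f : S × A → ℝ) : ℝ :=
  ∑ x, d x * (f x) ^ 2

/-!
At a fixed point `Q = 𝒯Q` the nonzero coordinate of the stochastic gradient at `(s, a, s')` is
`γ (E V - V s')`, where `V s' = max_{a'} Q(s', a')` and `E` averages over `P s a`. Its conditional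
second moment is therefore `γ²` times a variance, at most `γ² E V²`, and `|V| ≤ 1 / (1 - γ)`
because `|Q| ≤ 1 + γ max |Q|`. This yields the dimension-free bound `γ² / (1 - γ)²`.
-/

section WeightedAverage

variable {ι 𝕜 : Type*} [Fintype ι]

theorem sum_mul_sq_sum_mul_sub [CommRing 𝕜] {w : ι → 𝕜} (hw₁ : ∑ i, w i = 1) (f : ι → 𝕜) :
    ∑ i, w i * (∑ j, w j * f j - f i) ^ 2 = ∑ i, w i * f i ^ 2 - (∑ i, w i * f i) ^ 2 := by
  set m := ∑ j, w j * f j with hm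
  calc ∑ i, w i * (m - f i) ^ 2
      = ∑ i, (m ^ 2 * w i - 2 * m * (w i * f i) + w i * f i ^ 2) :=
        Finset.sum_congr rfl fun i _ => by ring
    _ = m ^ 2 * ∑ i, w i - 2 * m * m + ∑ i, w i * f i ^ 2 := by
        rw [Finset.sum_add_distrib, Finset.sum_sub_distrib, ← Finset.mul_sum, ← Finset.mul_sum,
          ← hm]
    _ = ∑ i, w i * f i ^ 2 - m ^ 2 := by rw [hw₁]; ring

variable [Field 𝕜] [LinearOrder 𝕜] [IsStrictOrderedRing 𝕜] {w f : ι → 𝕜} {M : 𝕜}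

theorem sum_mul_le_of_forall_le (hw₀ : ∀ i, 0 ≤ w i) (hw₁ : ∑ i, w i = 1) (hf : ∀ i, f i ≤ M) :
    ∑ i, w i * f i ≤ M :=
  (convex_Iic M).sum_mem (fun i _ => hw₀ i) hw₁ fun i _ => hf i

theorem abs_sum_mul_le_of_forall_abs_le (hw₀ : ∀ i, 0 ≤ w i) (hw₁ : ∑ i, w i = 1)
    (hf : ∀ i, |f i| ≤ M) : |∑ i, w i * f i| ≤ M :=
  abs_le.2 <| (convex_Icc (-M) M).sum_mem (fun i _ => hw₀ i) hw₁ fun i _ => abs_le.1 (hf i)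

theorem sum_mul_sq_sum_mul_sub_le (hw₀ : ∀ i, 0 ≤ w i) (hw₁ : ∑ i, w i = 1)
    (hf : ∀ i, |f i| ≤ M) : ∑ i, w i * (∑ j, w j * f j - f i) ^ 2 ≤ M ^ 2 :=
  calc ∑ i, w i * (∑ j, w j * f j - f i) ^ 2
      = ∑ i, w i * f i ^ 2 - (∑ i, w i * f i) ^ 2 := sum_mul_sq_sum_mul_sub hw₁ f
    _ ≤ ∑ i, w i * f i ^ 2 := sub_le_self _ (sq_nonneg _)
    _ ≤ M ^ 2 := sum_mul_le_of_forall_le hw₀ hw₁ fun i => sq_le_sq.2 ((hf i).trans (le_abs_self M))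

end WeightedAverage

section MarkovDecisionProcess

variable {S A : Type*} [Fintype A] [Nonempty A]

/-- The greedy state value `V(s) = max_a Q(s, a)` of an action-value function `Q`, as it occurs in
both the Bellman operator and the stochastic gradient. -/
noncomputable def greedyValue (Q : S × A → ℝ) (s : S) : ℝ :=
  Finset.univ.sup' Finset.univ_nonempty fun a => Q (s, a)

theorem abs_greedyValue_le {Q : S × A → ℝ} {s : S} {M : ℝ} (hQ : ∀ a, |Q (s, a)| ≤ M) :
    |greedyValue Q s| ≤ M := by
  obtain ⟨a, -, ha⟩ := Finset.exists_mem_eq_sup' Finset.univ_nonempty fun a => Q (s, a)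
  rw [greedyValue, ha]
  exact hQ a

variable [Fintype S] {P : S → A → S → ℝ} {r : S → A → ℝ} {γ R : ℝ} {Q : S × A → ℝ}

theorem bellman_apply (P : S → A → S → ℝ) (r : S → A → ℝ) (γ : ℝ) (Q : S × A → ℝ) (s : S) (a : A) :
    bellman P r γ Q (s, a) = r s a + γ * ∑ s', P s a s' * greedyValue Q s' :=
  rfl

theorem abs_bellman_le {M : ℝ} (hP₀ : ∀ s a s', 0 ≤ P s a s') (hP₁ : ∀ s a, ∑ s', P s a s' = 1)
    (hr : ∀ s a, |r s a| ≤ R) (hγ : 0 ≤ γ) (hQ : ∀ x, |Q x| ≤ M) (x : S × A) :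
    |bellman P r γ Q x| ≤ R + γ * M := by
  obtain ⟨s, a⟩ := x
  have h_avg : |∑ s', P s a s' * greedyValue Q s'| ≤ M :=
    abs_sum_mul_le_of_forall_abs_le (hP₀ s a) (hP₁ s a) fun s' =>
      abs_greedyValue_le fun a' => hQ (s', a')
  calc |bellman P r γ Q (s, a)|
      ≤ |r s a| + |γ * ∑ s', P s a s' * greedyValue Q s'| := abs_add_le _ _
    _ = |r s a| + γ * |∑ s', P s a s' * greedyValue Q s'| := by rw [abs_mul, abs_of_nonneg hγ]
    _ ≤ R + γ * M := by gcongr; exact hr s a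

theorem abs_le_of_bellman_eq_self (hP₀ : ∀ s a s', 0 ≤ P s a s')
    (hP₁ : ∀ s a, ∑ s', P s a s' = 1) (hr : ∀ s a, |r s a| ≤ R) (hγ₀ : 0 ≤ γ) (hγ₁ : γ < 1)
    (hQ : bellman P r γ Q = Q) (x : S × A) : |Q x| ≤ R / (1 - γ) := by
  have : Nonempty (S × A) := ⟨x⟩
  obtain ⟨y, hy⟩ := Finite.exists_max fun x => |Q x|
  have h_max : |Q y| ≤ R + γ * |Q y| := by
    simpa only [hQ] using abs_bellman_le hP₀ hP₁ hr hγ₀ hy y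
  refine (hy x).trans ((le_div_iff₀ (sub_pos.2 hγ₁)).2 ?_)
  linarith

variable [DecidableEq S] [DecidableEq A]

theorem sqNorm_sgrad (r : S → A → ℝ) (γ : ℝ) (Q Qk : S × A → ℝ) (s : S) (a : A) (s' : S) :
    sqNorm (sgrad r γ Q Qk (s, a, s')) = (Q (s, a) - r s a - γ * greedyValue Qk s') ^ 2 := by
  simp [sqNorm, sgrad, greedyValue]

theorem sqNorm_sgrad_of_bellman_eq_self (hQ : bellman P r γ Q = Q) (s : S) (a : A) (s' : S) :
    sqNorm (sgrad r γ Q Q (s, a, s')) =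
      γ ^ 2 * (∑ t, P s a t * greedyValue Q t - greedyValue Q s') ^ 2 := by
  have hQsa : Q (s, a) = r s a + γ * ∑ t, P s a t * greedyValue Q t := by
    rw [← bellman_apply, hQ]
  rw [sqNorm_sgrad, hQsa]
  ring

theorem sum_mul_sqNorm_sgrad_le (hP₀ : ∀ s a s', 0 ≤ P s a s')
    (hP₁ : ∀ s a, ∑ s', P s a s' = 1) (hr : ∀ s a, |r s a| ≤ R) (hγ₀ : 0 ≤ γ) (hγ₁ : γ < 1)
    (hQ : bellman P r γ Q = Q) (s : S) (a : A) :
    ∑ s', P s a s' * sqNorm (sgrad r γ Q Q (s, a, s')) ≤ (γ * R / (1 - γ)) ^ 2 := by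
  have hV : ∀ s', |greedyValue Q s'| ≤ R / (1 - γ) := fun s' =>
    abs_greedyValue_le fun a' => abs_le_of_bellman_eq_self hP₀ hP₁ hr hγ₀ hγ₁ hQ (s', a')
  calc ∑ s', P s a s' * sqNorm (sgrad r γ Q Q (s, a, s'))
      = γ ^ 2 * ∑ s', P s a s' * (∑ t, P s a t * greedyValue Q t - greedyValue Q s') ^ 2 := by
        simp only [sqNorm_sgrad_of_bellman_eq_self hQ, Finset.mul_sum, mul_left_comm]
    _ ≤ γ ^ 2 * (R / (1 - γ)) ^ 2 := by
        gcongr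
        exact sum_mul_sq_sum_mul_sub_le (hP₀ s a) (hP₁ s a) hV
    _ = (γ * R / (1 - γ)) ^ 2 := by rw [← mul_pow, mul_div_assoc]

theorem sgrad_variance_at_optimum_bound_general (hP₀ : ∀ s a s', 0 ≤ P s a s')
    (hP₁ : ∀ s a, ∑ s', P s a s' = 1) (hr : ∀ s a, |r s a| ≤ R) (hγ₀ : 0 ≤ γ) (hγ₁ : γ < 1)
    (hQ : bellman P r γ Q = Q) {d : S × A → ℝ} (hd₀ : ∀ x, 0 ≤ d x) (hd₁ : ∑ x, d x = 1) :
    ∑ smp : S × A × S, d (smp.1, smp.2.1) * P smp.1 smp.2.1 smp.2.2 *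
        sqNorm (sgrad r γ Q Q smp) ≤ (γ * R / (1 - γ)) ^ 2 :=
  calc ∑ smp : S × A × S, d (smp.1, smp.2.1) * P smp.1 smp.2.1 smp.2.2 *
        sqNorm (sgrad r γ Q Q smp)
      = ∑ x : S × A, d x * ∑ s', P x.1 x.2 s' * sqNorm (sgrad r γ Q Q (x.1, x.2, s')) := by
        simp only [Fintype.sum_prod_type, Finset.mul_sum, mul_assoc]
    _ ≤ (γ * R / (1 - γ)) ^ 2 := sum_mul_le_of_forall_le hd₀ hd₁ fun x =>
        sum_mul_sqNorm_sgrad_le hP₀ hP₁ hr hγ₀ hγ₁ hQ x.1 x.2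

end MarkovDecisionProcess

theorem sgrad_variance_at_optimum_bound
    {S A : Type*} [Fintype S] [Fintype A] [Nonempty S] [Nonempty A]
    [DecidableEq S] [DecidableEq A]
    (P : S → A → S → ℝ) (hP0 : ∀ s a s', 0 ≤ P s a s') (hP1 : ∀ s a, ∑ s', P s a s' = 1)
    (r : S → A → ℝ) (hr : ∀ s a, |r s a| ≤ 1)
    (γ : ℝ) (hγ : γ ∈ Set.Ioo (0 : ℝ) 1)
    (Qstar : S × A → ℝ) (hQstar : bellman P r γ Qstar = Qstar)
    (d : S × A → ℝ) (hd0 : ∀ x, 0 < d x) (hd1 : ∑ x, d x = 1) :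
    ∑ smp : S × A × S, d (smp.1, smp.2.1) * P smp.1 smp.2.1 smp.2.2 *
        sqNorm (sgrad r γ Qstar Qstar smp) ≤
      9 * (Fintype.card S : ℝ) * (Fintype.card A : ℝ) / (1 - γ) ^ 2 := by
  have h_card : (1 : ℝ) ≤ Fintype.card S * Fintype.card A := by
    exact_mod_cast Nat.mul_pos Fintype.card_pos Fintype.card_pos
  refine (sgrad_variance_at_optimum_bound_general hP0 hP1 hr hγ.1.le hγ.2 hQstar
    (fun x => (hd0 x).le) hd1).trans ?_
  rw [mul_one, div_pow]
  gcongr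
  linarith [pow_le_one₀ (n := 2) hγ.1.le hγ.2.le]
end

section
/- Let c > 0, β = 2/c, λ ≥ 2, C ≥ 0, and let (a_t)_{t≥0} be a sequence of nonnegative reals satisfying a_{t+1} ≤ (1 − cβ/(λ+t))·a_t + β²C/(λ+t)² for all t ≥ 0. Then a_t ≤ max{λ·a_0, β²C}/(λ+t) for all t ≥ 0. -/
/-!
Write `κ = c * β`, `b = β ^ 2 * C` and `s = λ + t`. A bound `a t ≤ M / s` with `0 ≤ M` passes to
`t + 1` as soon as `b ≤ (κ - 1) * M`: the terms in `κ` then cancel, leaving `M * (s - 1) / s ^ 2`,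
which is at most `M / (s + 1)` because `(s - 1) * (s + 1) ≤ s ^ 2`. The maximum of `λ * a 0` and
`b / (κ - 1)` is the least `M` that also covers `t = 0`.
-/

section

variable {K : Type*} [Field K] [LinearOrder K] [IsStrictOrderedRing K]

theorem mul_sub_one_div_sq_le_div_add_one {M s : K} (hM : 0 ≤ M) (hs : 0 < s) :
    M * (s - 1) / s ^ 2 ≤ M / (s + 1) := by
  have key : (s - 1) * (s + 1) ≤ s ^ 2 := by linarith
  rw [div_le_div_iff₀ (by positivity) (by positivity), mul_assoc]
  exact mul_le_mul_of_nonneg_left key hM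

theorem one_sub_div_mul_add_div_sq_le_div_add_one {κ M b s x : K} (hM : 0 ≤ M) (hs : 0 < s)
    (hκ : κ ≤ s) (hb : b ≤ (κ - 1) * M) (hx : x ≤ M / s) :
    (1 - κ / s) * x + b / s ^ 2 ≤ M / (s + 1) := by
  have hfactor : 0 ≤ 1 - κ / s := sub_nonneg.2 ((div_le_one hs).2 hκ)
  calc
    (1 - κ / s) * x + b / s ^ 2 ≤ (1 - κ / s) * (M / s) + (κ - 1) * M / s ^ 2 := by gcongr
    _ = M * (s - 1) / s ^ 2 := by field_simp; ring
    _ ≤ M / (s + 1) := mul_sub_one_div_sq_le_div_add_one hM hs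

theorem le_div_add_natCast_of_recursion {κ M b lam : K} {a : ℕ → K} (hM : 0 ≤ M) (hlam : 0 < lam)
    (hκ : κ ≤ lam) (hb : b ≤ (κ - 1) * M) (h0 : lam * a 0 ≤ M)
    (hrec : ∀ t : ℕ, a (t + 1) ≤ (1 - κ / (lam + t)) * a t + b / (lam + t) ^ 2) (t : ℕ) :
    a t ≤ M / (lam + t) := by
  induction t with
  | zero => rwa [Nat.cast_zero, add_zero, le_div_iff₀' hlam]
  | succ t ih =>
    have hs : lam ≤ lam + t := le_add_of_nonneg_right t.cast_nonneg
    rw [Nat.cast_succ, ← add_assoc]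
    exact (hrec t).trans <| one_sub_div_mul_add_div_sq_le_div_add_one hM (hlam.trans_le hs)
      (hκ.trans hs) hb ih

theorem sgd_rate_recursion_general {c β lam C : K} {a : ℕ → K} (hcβ : 1 < c * β)
    (hlam : c * β ≤ lam) (hC : 0 ≤ C)
    (hrec : ∀ t : ℕ,
      a (t + 1) ≤ (1 - c * β / (lam + t)) * a t + β ^ 2 * C / (lam + t) ^ 2) (t : ℕ) :
    a t ≤ max (lam * a 0) (β ^ 2 * C / (c * β - 1)) / (lam + t) := by
  have hgap : 0 < c * β - 1 := sub_pos.2 hcβ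
  have hnoise : 0 ≤ β ^ 2 * C / (c * β - 1) := by positivity
  exact le_div_add_natCast_of_recursion (le_max_of_le_right hnoise)
    (zero_lt_one.trans (hcβ.trans_le hlam)) hlam ((div_le_iff₀' hgap).1 (le_max_right _ _))
    (le_max_left _ _) hrec t

end

theorem sgd_rate_recursion (c β lam C : ℝ) (hc : 0 < c) (hβ : β = 2 / c)
    (hlam : 2 ≤ lam) (hC : 0 ≤ C)
    (a : ℕ → ℝ) (ha0 : ∀ t, 0 ≤ a t)
    (hrec : ∀ t : ℕ, a (t + 1) ≤ (1 - c * β / (lam + t)) * a t + β ^ 2 * C / (lam + t) ^ 2) :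
    ∀ t : ℕ, a t ≤ max (lam * a 0) (β ^ 2 * C) / (lam + t) := by
  have hcβ : c * β = 2 := by rw [hβ, mul_div_cancel₀ _ hc.ne']
  simpa [hcβ, show (2 : ℝ) - 1 = 1 by norm_num] using
    sgd_rate_recursion_general (by linarith) (by linarith) hC hrec
end
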